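/- Let ν ≥ 1 be an integer and (M_k)_{k∈ℕ} a sequence of positive reals satisfying (M.0), (M.1) with constants A ≥ 1, H ≥ 1, and (G), with associated function M(r) := sup_{k∈ℕ} log(r^{νk}/M_{νk}). Then for every ε > 0 and every k ∈ ℕ there exist constants C > 0 and L > 0 such that for all t > 0: sup_{m∈ℕ} ε^m · t^{m+k} / M_{νm} ≤ C · exp(M(L·t^{1/ν})). -/

import Mathlib

/-- The associated function `M(r) = sup_{k ∈ ℕ} log ( r^{νk} / M_{νk} )`. -/
noncomputable def assocM (ν : ℕ) (Mk : ℕ → ℝ) (r : ℝ) : ℝ :=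
  ⨆ k : ℕ, Real.log (r ^ (ν * k) / Mk (ν * k))

/-!
Iterating (M.1) gives `M_{ν(m+k)} ≤ C B ^ m M_{νm}` for fixed `k`, so replacing the denominator
`M_{νm}` by `M_{ν(m+k)}` costs a geometric factor. With `P = max 1 (ε B)` we have
`(ε B) ^ m ≤ P ^ (m + k)`, and the resulting `(P t) ^ (m + k) / M_{ν(m+k)}` is one of the terms
whose supremum is `exp (M((P t) ^ (1 / ν)))`. By (G) that supremum is finite, since
`r ^ n / M_n ≤ C₀ (l r) ^ n / n! ≤ C₀ exp (l r)`; an infinite one would be `0` in `assocM`.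
-/

open Set

theorem le_pow_mul_pow_mul_of_succ_le {R : Type*} [CommSemiring R] [PartialOrder R]
    [IsOrderedRing R] {u : ℕ → R} {A H : R} (hA : 0 ≤ A) (hH : 0 ≤ H)
    (hu : ∀ n, u (n + 1) ≤ A * H ^ n * u n) (n j : ℕ) :
    u (n + j) ≤ A ^ j * H ^ (j * n + j.choose 2) * u n := by
  induction j with
  | zero => simp
  | succ j ih =>
    have choose_succ : (j + 1).choose 2 = j + j.choose 2 := by
      rw [Nat.choose_succ_succ' j 1, Nat.choose_one_right]
    calc u (n + (j + 1)) ≤ A * H ^ (n + j) * u (n + j) := hu (n + j)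
      _ ≤ A * H ^ (n + j) * (A ^ j * H ^ (j * n + j.choose 2) * u n) := by gcongr
      _ = A ^ (j + 1) * H ^ ((j + 1) * n + (j + 1).choose 2) * u n := by
        rw [choose_succ]
        ring

theorem pow_div_le_mul_exp_of_factorial_le {a C l r : ℝ} {n : ℕ} (ha : 0 < a) (hC : 0 ≤ C)
    (hl : 0 ≤ l) (hr : 0 ≤ r) (h : (n.factorial : ℝ) ≤ C * l ^ n * a) :
    r ^ n / a ≤ C * Real.exp (l * r) := by
  have inv_le : 1 / a ≤ C * l ^ n / n.factorial := by
    rwa [div_le_div_iff₀ ha (by positivity), one_mul]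
  calc r ^ n / a = r ^ n * (1 / a) := by ring
    _ ≤ r ^ n * (C * l ^ n / n.factorial) := by gcongr
    _ = C * ((l * r) ^ n / n.factorial) := by ring
    _ ≤ C * Real.exp (l * r) := by
      gcongr
      exact Real.pow_div_factorial_le_exp _ (by positivity) n

section AssociatedFunction

variable {ν : ℕ} {M : ℕ → ℝ}

theorem bddAbove_range_log_pow_div_of_factorial_le {C l r : ℝ} (hM : ∀ n, 0 < M n)
    (hC : 0 ≤ C) (hl : 0 ≤ l) (h : ∀ n : ℕ, (n.factorial : ℝ) ≤ C * l ^ n * M n) (hr : 0 < r) :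
    BddAbove (range fun n ↦ Real.log (r ^ (ν * n) / M (ν * n))) := by
  refine ⟨Real.log (C * Real.exp (l * r)), forall_mem_range.2 fun n ↦ ?_⟩
  exact Real.log_le_log (div_pos (pow_pos hr _) (hM _))
    (pow_div_le_mul_exp_of_factorial_le (hM _) hC hl hr.le (h _))

theorem pow_div_le_exp_assocM {r : ℝ} {n : ℕ} (hM : 0 < M (ν * n)) (hr : 0 < r)
    (hbdd : BddAbove (range fun n ↦ Real.log (r ^ (ν * n) / M (ν * n)))) :
    r ^ (ν * n) / M (ν * n) ≤ Real.exp (assocM ν M r) :=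
  (Real.log_le_iff_le_exp (div_pos (pow_pos hr _) hM)).1 (le_ciSup hbdd n)

theorem pow_mul_pow_div_le_mul_exp_assocM {B C ε t : ℝ} {k m : ℕ} (hν : ν ≠ 0)
    (hM : ∀ n, 0 < M n)
    (hbdd : ∀ r > 0, BddAbove (range fun n ↦ Real.log (r ^ (ν * n) / M (ν * n))))
    (hB : 0 ≤ B) (hC : 0 ≤ C) (hε : 0 ≤ ε) (ht : 0 < t)
    (hshift : M (ν * (m + k)) ≤ C * B ^ m * M (ν * m)) :
    ε ^ m * t ^ (m + k) / M (ν * m) ≤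
      C * Real.exp (assocM ν M ((max 1 (ε * B) * t) ^ (1 / (ν : ℝ)))) := by
  set P := max 1 (ε * B)
  have hPt : 0 < P * t := mul_pos (zero_lt_one.trans_le (le_max_left _ _)) ht
  have hr : 0 < (P * t) ^ (1 / (ν : ℝ)) := Real.rpow_pos_of_pos hPt _
  have root_pow : ((P * t) ^ (1 / (ν : ℝ))) ^ ν = P * t := by
    rw [one_div, Real.rpow_inv_natCast_pow hPt.le hν]
  have geometric_le : (ε * B) ^ m ≤ P ^ (m + k) :=
    (pow_le_pow_left₀ (by positivity) (le_max_right _ _) m).trans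
      (pow_le_pow_right₀ (le_max_left _ _) (Nat.le_add_right m k))
  have inv_le : 1 / M (ν * m) ≤ C * B ^ m / M (ν * (m + k)) := by
    rwa [div_le_div_iff₀ (hM _) (hM _), one_mul]
  have hMmk := hM (ν * (m + k))
  calc ε ^ m * t ^ (m + k) / M (ν * m) = ε ^ m * t ^ (m + k) * (1 / M (ν * m)) := by ring
    _ ≤ ε ^ m * t ^ (m + k) * (C * B ^ m / M (ν * (m + k))) := by gcongr
    _ = C * ((ε * B) ^ m * t ^ (m + k) / M (ν * (m + k))) := by ring
    _ ≤ C * (P ^ (m + k) * t ^ (m + k) / M (ν * (m + k))) := by gcongr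
    _ = C * (((P * t) ^ (1 / (ν : ℝ))) ^ (ν * (m + k)) / M (ν * (m + k))) := by
      rw [pow_mul, root_pow, mul_pow]
    _ ≤ C * Real.exp (assocM ν M ((P * t) ^ (1 / (ν : ℝ)))) := by
      gcongr
      exact pow_div_le_exp_assocM hMmk hr (hbdd _ hr)

theorem stmt_18_general {A H ε : ℝ} (hν : ν ≠ 0) (hM : ∀ n, 0 < M n)
    (hM1 : ∀ n, M (n + 1) ≤ A * H ^ n * M n)
    (hbdd : ∀ r > 0, BddAbove (range fun n ↦ Real.log (r ^ (ν * n) / M (ν * n))))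
    (hε : 0 ≤ ε) (k : ℕ) :
    ∃ C > 0, ∃ L > 0, ∀ t > 0, ∀ m : ℕ,
      ε ^ m * t ^ (m + k) / M (ν * m) ≤
        C * Real.exp (assocM ν M (L * t ^ (1 / (ν : ℝ)))) := by
  have factor_pos (n : ℕ) : 0 < A * H ^ n :=
    pos_of_mul_pos_left ((hM (n + 1)).trans_le (hM1 n)) (hM n).le
  have hA : 0 < A := by simpa using factor_pos 0
  have hH : 0 < H := by simpa [hA] using factor_pos 1
  have hshift (m : ℕ) : M (ν * (m + k)) ≤
      A ^ (ν * k) * H ^ (ν * k).choose 2 * (H ^ (ν * k * ν)) ^ m * M (ν * m) := by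
    rw [mul_add]
    exact (le_pow_mul_pow_mul_of_succ_le hA.le hH.le hM1 (ν * m) (ν * k)).trans_eq (by ring)
  have hP : 0 < max 1 (ε * H ^ (ν * k * ν)) := zero_lt_one.trans_le (le_max_left _ _)
  refine ⟨A ^ (ν * k) * H ^ (ν * k).choose 2, by positivity,
    max 1 (ε * H ^ (ν * k * ν)) ^ (1 / (ν : ℝ)), by positivity, fun t ht m ↦ ?_⟩
  rw [← Real.mul_rpow hP.le ht.le]
  exact pow_mul_pow_div_le_mul_exp_assocM hν hM hbdd (by positivity) (by positivity) hε ht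
    (hshift m)

end AssociatedFunction

theorem stmt_18 (ν : ℕ) (hν : 1 ≤ ν) (Mk : ℕ → ℝ) (hMpos : ∀ k, 0 < Mk k)
    (hM0 : Mk 0 = 1)
    (A H : ℝ) (hA : 1 ≤ A) (hH : 1 ≤ H)
    (hM1 : ∀ k : ℕ, Mk (k + 1) ≤ A * H ^ k * Mk k)
    (hG : ∃ C₀ > (0 : ℝ), ∃ l > (0 : ℝ), ∀ k : ℕ, (k.factorial : ℝ) ≤ C₀ * l ^ k * Mk k) :
    ∀ ε : ℝ, 0 < ε → ∀ k : ℕ, ∃ C > (0 : ℝ), ∃ L > (0 : ℝ), ∀ t : ℝ, 0 < t →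
      (⨆ m : ℕ, ε ^ m * t ^ (m + k) / Mk (ν * m)) ≤
        C * Real.exp (assocM ν Mk (L * t ^ (1 / (ν : ℝ)))) := by
  intro ε hε k
  obtain ⟨C₀, hC₀, l, hl, hfactorial⟩ := hG
  obtain ⟨C, hC, L, hL, hbound⟩ := stmt_18_general (Nat.one_le_iff_ne_zero.1 hν) hMpos hM1
    (fun r hr ↦ bddAbove_range_log_pow_div_of_factorial_le hMpos hC₀.le hl.le hfactorial hr)
    hε.le k
  exact ⟨C, hC, L, hL, fun t ht ↦ ciSup_le (hbound t ht)⟩
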